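/- Let g₀(t,x) := (2πt)^{−1/2}·exp(−x²/(2t)) for t > 0, and define the associated heat functions w_n(x,t) := g₀(t,x)·v_n(x,−t)·(t/2)^{−n}. Then for every n ∈ ℕ and all x ∈ ℝ, t > 0, one has ∂w_n/∂x (x,t) = −(1/2)·w_{n+1}(x,t). -/

import Mathlib

/-- Heat polynomials `v_n(x,t) = Σ_{k=0}^{⌊n/2⌋} n!/(2^k·k!·(n−2k)!)·x^{n−2k}·t^k`. -/
noncomputable def heatPoly (n : ℕ) (x t : ℝ) : ℝ :=
  ∑ k ∈ Finset.range (n / 2 + 1),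
    ((Nat.factorial n : ℝ) / (2 ^ k * Nat.factorial k * Nat.factorial (n - 2 * k))) *
      x ^ (n - 2 * k) * t ^ k

/-- The Gaussian fundamental solution `g₀(t,x) = (2πt)^{−1/2}·exp(−x²/(2t))`. -/
noncomputable def gauss0 (t x : ℝ) : ℝ :=
  (2 * Real.pi * t) ^ (-(1 / 2 : ℝ)) * Real.exp (-x ^ 2 / (2 * t))

/-- The associated heat functions `w_n(x,t) = g₀(t,x)·v_n(x,−t)·(t/2)^{−n}`. -/
noncomputable def assocHeat (n : ℕ) (x t : ℝ) : ℝ :=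
  gauss0 t x * heatPoly n x (-t) * (t / 2) ^ (-(n : ℤ))

/-!
Since `v_n(·,t) = exp(t∂²/2) xⁿ`, differentiation gives `∂v_n = n·v_{n-1}`, and moving the operator
`exp(t∂²/2)` past multiplication by `x` gives `v_{n+1} = x·v_n + t·∂v_n`. The logarithmic derivative
of `g₀(t,·)` is `-x/t`, so at time `-t` the product rule produces exactly this recurrence:
`∂(g₀·v_n) = g₀·(-(x/t)·v_n + ∂v_n) = -(1/t)·g₀·v_{n+1}`. The factor `(t/2)^{-n}` turns `1/t`
into `1/2`.
-/

theorem succ_descFactorial_succ_eq_add (n m : ℕ) :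
    (n + 1).descFactorial (m + 1) = n.descFactorial (m + 1) + (m + 1) * n.descFactorial m := by
  rw [Nat.succ_descFactorial_succ, Nat.descFactorial_succ]
  rcases le_or_gt m n with hmn | hnm
  · rw [← add_mul, ← add_assoc, Nat.sub_add_cancel hmn]
  · simp [Nat.descFactorial_of_lt hnm]

theorem descFactorial_succ_eq_mul_pred (n m : ℕ) :
    n.descFactorial (m + 1) = n * (n - 1).descFactorial m := by
  cases n with
  | zero => simp
  | succ n => exact Nat.succ_descFactorial_succ n m

/-- The coefficients vanish for `2k > n`, so all heat polynomials of bounded degree can be summed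
over one common range. -/
theorem heatPoly_eq_sum_descFactorial {n N : ℕ} (hN : n / 2 < N) (x t : ℝ) :
    heatPoly n x t = ∑ k ∈ Finset.range N,
      (n.descFactorial (2 * k) : ℝ) / (2 ^ k * Nat.factorial k) * x ^ (n - 2 * k) * t ^ k := by
  rw [heatPoly, ← Finset.sum_subset (Finset.range_mono hN)]
  · refine Finset.sum_congr rfl fun k hk => ?_
    have hkn : 2 * k ≤ n := by
      rw [Finset.mem_range] at hk
      omega
    rw [← Nat.factorial_mul_descFactorial hkn]
    push_cast
    field_simp
  · intro k _ hk
    have hnk : n < 2 * k := by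
      rw [Finset.mem_range] at hk
      omega
    simp [Nat.descFactorial_of_lt hnk]

theorem hasDerivAt_heatPoly (n : ℕ) (x t : ℝ) :
    HasDerivAt (fun ξ => heatPoly n ξ t) (n * heatPoly (n - 1) x t) x := by
  simp_rw [heatPoly_eq_sum_descFactorial (show n / 2 < n + 1 by omega),
    heatPoly_eq_sum_descFactorial (show (n - 1) / 2 < n + 1 by omega), Finset.mul_sum]
  refine HasDerivAt.fun_sum fun k _ =>
    (((hasDerivAt_pow _ x).const_mul _).mul_const _).congr_deriv ?_
  have hcoeff : ((n - 2 * k : ℕ) : ℝ) * n.descFactorial (2 * k) =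
      n * (n - 1).descFactorial (2 * k) := by
    exact_mod_cast (Nat.descFactorial_succ n (2 * k)).symm.trans
      (descFactorial_succ_eq_mul_pred n (2 * k))
  rw [Nat.sub_right_comm n (2 * k) 1]
  linear_combination x ^ (n - 1 - 2 * k) * t ^ k / (2 ^ k * Nat.factorial k) * hcoeff

theorem heatPoly_succ (n : ℕ) (x t : ℝ) :
    heatPoly (n + 1) x t = x * heatPoly n x t + t * (n * heatPoly (n - 1) x t) := by
  rw [heatPoly_eq_sum_descFactorial (show (n + 1) / 2 < n + 2 by omega),
    heatPoly_eq_sum_descFactorial (show n / 2 < n + 2 by omega),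
    heatPoly_eq_sum_descFactorial (show (n - 1) / 2 < n + 1 by omega),
    Finset.sum_range_succ', Finset.sum_range_succ' _ (n + 1), mul_add, Finset.mul_sum,
    Finset.mul_sum, Finset.mul_sum, add_right_comm, ← Finset.sum_add_distrib]
  congr 1
  · refine Finset.sum_congr rfl fun k _ => ?_
    have hcoeff : ((n + 1).descFactorial (2 * (k + 1)) : ℝ) =
        n.descFactorial (2 * (k + 1)) + 2 * (k + 1) * (n * (n - 1).descFactorial (2 * k)) := by
      have h := succ_descFactorial_succ_eq_add n (2 * k + 1)
      rw [descFactorial_succ_eq_mul_pred n (2 * k)] at h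
      exact_mod_cast h
    have hpow : (n.descFactorial (2 * (k + 1)) : ℝ) * x ^ (n - 1 - 2 * k) =
        n.descFactorial (2 * (k + 1)) * (x * x ^ (n - 2 * (k + 1))) := by
      rcases le_or_gt (2 * (k + 1)) n with hkn | hnk
      · rw [← pow_succ', show n - 2 * (k + 1) + 1 = n - 1 - 2 * k by omega]
      · simp [Nat.descFactorial_of_lt hnk]
    rw [show n + 1 - 2 * (k + 1) = n - 1 - 2 * k by omega, hcoeff, Nat.factorial_succ]
    push_cast
    field_simp
    linear_combination 2 ^ k * t ^ (k + 1) * hpow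
  · simp [pow_succ']

theorem hasDerivAt_gauss0 (t x : ℝ) :
    HasDerivAt (gauss0 t) (-(x / t) * gauss0 t x) x := by
  have hexponent : HasDerivAt (fun ξ : ℝ => -ξ ^ 2 / (2 * t)) (-(x / t)) x := by
    refine ((hasDerivAt_pow 2 x).fun_neg.div_const (2 * t)).congr_deriv ?_
    rw [neg_div, Nat.cast_ofNat, pow_one, mul_div_mul_left x t two_ne_zero]
  refine (hexponent.exp.const_mul ((2 * Real.pi * t) ^ (-(1 / 2 : ℝ)))).congr_deriv ?_
  rw [gauss0]
  ring

/-- For every `n` and `t > 0`, `w_n'(x,t) = −(1/2)·w_{n+1}(x,t)`, where the prime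
denotes differentiation in `x`. -/
theorem assocHeat_deriv_x (n : ℕ) :
    ∀ (x t : ℝ), 0 < t →
      deriv (fun ξ : ℝ => assocHeat n ξ t) x = -(1 / 2) * assocHeat (n + 1) x t := by
  intro x t ht
  have hw : HasDerivAt (fun ξ => assocHeat n ξ t)
      ((-(x / t) * gauss0 t x * heatPoly n x (-t) +
        gauss0 t x * (n * heatPoly (n - 1) x (-t))) * (t / 2) ^ (-(n : ℤ))) x :=
    ((hasDerivAt_gauss0 t x).mul (hasDerivAt_heatPoly n x (-t))).mul_const _
  have hscale : (t / 2) ^ (-((n + 1 : ℕ) : ℤ)) = (t / 2) ^ (-(n : ℤ)) * (2 / t) := by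
    rw [Nat.cast_succ, neg_add, zpow_add₀ (by positivity), zpow_neg_one, inv_div]
  rw [hw.deriv, assocHeat, heatPoly_succ, hscale]
  field_simp
  ring
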